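/- Let (T_i)_{i=1}^∞ be an almost-commuting, submultiplicative sequence of bounded linear operators on a Banach space X. Then the set of all absolutely mean irregular vectors is dense in the set of all absolutely mean semi-irregular vectors: for every absolutely mean semi-irregular vector x and every ε>0 there exists an absolutely mean irregular vector z with ‖x−z‖<ε. -/

import Mathlib

open Filter Topology

variable {X Y : Type*} [NormedAddCommGroup X] [NormedSpace ℝ X]
  [NormedAddCommGroup Y] [NormedSpace ℝ Y]

/-- The Cesàro average `(1/n) ∑_{i=1}^{n} ‖T i x - T i y‖`. -/
noncomputable def mavg (T : ℕ → X →L[ℝ] Y) (x y : X) (n : ℕ) : ℝ :=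
  (∑ i ∈ Finset.Icc 1 n, ‖T i x - T i y‖) / n

/-- The Cesàro average `(1/n) ∑_{i=1}^{n} ‖T i x‖`. -/
noncomputable def avg (T : ℕ → X →L[ℝ] Y) (x : X) (n : ℕ) : ℝ :=
  (∑ i ∈ Finset.Icc 1 n, ‖T i x‖) / n

/-- `limsup_n (1/n) ∑_{i=1}^{n} ‖T i x - T i y‖`, computed in `EReal`. -/
noncomputable def msup (T : ℕ → X →L[ℝ] Y) (x y : X) : EReal :=
  Filter.limsup (fun n => (mavg T x y n : EReal)) Filter.atTop

/-- `liminf_n (1/n) ∑_{i=1}^{n} ‖T i x - T i y‖`, computed in `EReal`. -/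
noncomputable def minf (T : ℕ → X →L[ℝ] Y) (x y : X) : EReal :=
  Filter.liminf (fun n => (mavg T x y n : EReal)) Filter.atTop

/-- `limsup_n (1/n) ∑_{i=1}^{n} ‖T i x‖`, computed in `EReal`. -/
noncomputable def asup (T : ℕ → X →L[ℝ] Y) (x : X) : EReal :=
  Filter.limsup (fun n => (avg T x n : EReal)) Filter.atTop

/-- `liminf_n (1/n) ∑_{i=1}^{n} ‖T i x‖`, computed in `EReal`. -/
noncomputable def ainf (T : ℕ → X →L[ℝ] Y) (x : X) : EReal :=
  Filter.liminf (fun n => (avg T x n : EReal)) Filter.atTop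

/-- `(T i)` is submultiplicative. -/
def Submultiplicative (T : ℕ → X →L[ℝ] X) : Prop :=
  ∃ C : ℝ, 0 < C ∧ ∀ z : X, ∀ i m : ℕ, 1 ≤ i → 1 ≤ m →
    ‖T (i + m) z‖ ≤ C * ‖T i (T m z)‖

/-- `(T i)` is almost-commuting. -/
def AlmostCommuting (T : ℕ → X →L[ℝ] X) : Prop :=
  ∀ x : X, ∀ k : ℕ, 1 ≤ k →
    Filter.Tendsto (fun i => T i (T k x) - T k (T i x)) Filter.atTop (nhds 0)

theorem avg_nonneg' (T : ℕ → X →L[ℝ] X) (x : X) (n : ℕ) : 0 ≤ avg T x n := by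
  unfold avg; positivity

theorem avg_add_le (T : ℕ → X →L[ℝ] X) (x y : X) (n : ℕ) :
    avg T (x + y) n ≤ avg T x n + avg T y n := by
  unfold avg
  rw [← add_div, ← Finset.sum_add_distrib]
  gcongr with i hi
  rw [map_add]
  exact norm_add_le _ _

theorem avg_smul' (T : ℕ → X →L[ℝ] X) (c : ℝ) (x : X) (n : ℕ) :
    avg T (c • x) n = |c| * avg T x n := by
  unfold avg
  rw [← mul_div_assoc, Finset.mul_sum]
  simp [norm_smul]

theorem avg_continuous (T : ℕ → X →L[ℝ] X) (n : ℕ) : Continuous (fun x => avg T x n) := by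
  unfold avg
  fun_prop

/-- vectors whose averages tend to zero along `n`. -/
def nullSub (T : ℕ → X →L[ℝ] X) (n : ℕ → ℕ) : Submodule ℝ X where
  carrier := {y | Tendsto (fun k => avg T y (n k)) atTop (𝓝 0)}
  zero_mem' := by simp [avg]
  add_mem' := by
    intro a b ha hb
    simp only [Set.mem_setOf_eq] at *
    have h := ha.add hb
    rw [add_zero] at h
    exact squeeze_zero (fun k => avg_nonneg' T _ _) (fun k => avg_add_le T a b (n k)) h
  smul_mem' := by
    intro c a ha
    simp only [Set.mem_setOf_eq] at *
    simp only [avg_smul']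
    simpa using ha.const_mul |c|

theorem avg_comm_le (T : ℕ → X →L[ℝ] X) (x : X) (k n : ℕ) :
    avg T (T k x) n ≤ ‖T k‖ * avg T x n +
      (∑ i ∈ Finset.Icc 1 n, ‖T i (T k x) - T k (T i x)‖) / n := by
  unfold avg
  rw [← mul_div_assoc, Finset.mul_sum, ← add_div, ← Finset.sum_add_distrib]
  gcongr with i hi
  calc ‖T i (T k x)‖ = ‖T k (T i x) + (T i (T k x) - T k (T i x))‖ := by congr 1; abel
    _ ≤ ‖T k (T i x)‖ + ‖T i (T k x) - T k (T i x)‖ := norm_add_le _ _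
    _ ≤ _ := by gcongr; exact (T k).le_opNorm _

theorem cesaro_Icc (u : ℕ → ℝ) (hu : Tendsto u atTop (𝓝 0)) :
    Tendsto (fun n : ℕ => (∑ i ∈ Finset.Icc 1 n, u i) / n) atTop (𝓝 0) := by
  have h := ((tendsto_add_atTop_iff_nat 1).2 hu).cesaro
  refine h.congr fun n => ?_
  have : ∑ i ∈ Finset.Icc 1 n, u i = ∑ i ∈ Finset.range n, u (i + 1) := by
    induction n with
    | zero => simp
    | succ n ih => rw [Finset.sum_Icc_succ_top (by omega), Finset.sum_range_succ, ih]
  rw [this, div_eq_inv_mul]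

theorem mem_nullSub_T (T : ℕ → X →L[ℝ] X) (hac : AlmostCommuting T) (n : ℕ → ℕ)
    (hn : Tendsto n atTop atTop) (x : X) (hx : x ∈ nullSub T n) (k : ℕ) (hk : 1 ≤ k) :
    T k x ∈ nullSub T n := by
  change Tendsto (fun k => avg T x (n k)) atTop (𝓝 0) at hx
  change Tendsto (fun j => avg T (T k x) (n j)) atTop (𝓝 0)
  have h1 := (cesaro_Icc _ (by simpa using (hac x k hk).norm :
    Tendsto (fun i => ‖T i (T k x) - T k (T i x)‖) atTop (𝓝 0))).comp hn
  have h2 := (hx.const_mul ‖T k‖).add h1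
  simp only [mul_zero, add_zero] at h2
  exact squeeze_zero (fun j => avg_nonneg' T _ _) (fun j => avg_comm_le T x k (n j)) h2

theorem avg_split_le (T : ℕ → X →L[ℝ] X) (C : ℝ) (hC : 0 < C)
    (hsub : ∀ z : X, ∀ i m : ℕ, 1 ≤ i → 1 ≤ m → ‖T (i + m) z‖ ≤ C * ‖T i (T m z)‖)
    (x : X) (i : ℕ) (hi : 1 ≤ i) (n : ℕ) :
    avg T x n ≤ (∑ j ∈ Finset.Icc 1 i, ‖T j x‖) / n + C * avg T (T i x) n := by
  unfold avg
  rw [← mul_div_assoc, ← add_div]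
  gcongr
  have key : ∑ j ∈ Finset.Icc 1 (n + i), ‖T j x‖ ≤
      ∑ j ∈ Finset.Icc 1 i, ‖T j x‖ + C * ∑ j ∈ Finset.Icc 1 n, ‖T j (T i x)‖ := by
    induction n with
    | zero => simp
    | succ n ih =>
      rw [show n + 1 + i = (n + i) + 1 by ring, Finset.sum_Icc_succ_top (by omega),
        Finset.sum_Icc_succ_top (by omega), mul_add]
      have := hsub x (n + 1) i (by omega) hi
      rw [show n + 1 + i = (n + i) + 1 by ring] at this
      linarith
  refine le_trans ?_ key
  exact Finset.sum_le_sum_of_subset_of_nonneg (Finset.Icc_subset_Icc_right (by omega))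
    (fun _ _ _ => norm_nonneg _)

theorem exists_small (T : ℕ → X →L[ℝ] X) (x : X) (n : ℕ) (hn : 1 ≤ n) (δ : ℝ)
    (h : avg T x n < δ) : ∃ i, 1 ≤ i ∧ ‖T i x‖ < δ := by
  by_contra! hc
  have hn' : (0 : ℝ) < n := by exact_mod_cast hn
  have : δ ≤ avg T x n := by
    unfold avg
    rw [le_div_iff₀ hn']
    calc δ * n = ∑ i ∈ Finset.Icc 1 n, δ := by simp [mul_comm]
      _ ≤ _ := Finset.sum_le_sum fun i hi => hc i (Finset.mem_Icc.1 hi).1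
  linarith

theorem absolutelyMeanIrregular_dense_in_semiIrregular [CompleteSpace X]
    (T : ℕ → X →L[ℝ] X) (hac : AlmostCommuting T) (hsub : Submultiplicative T) :
    ∀ x : X, (ainf T x = 0 ∧ 0 < asup T x) → ∀ ε : ℝ, 0 < ε →
      ∃ z : X, ‖x - z‖ < ε ∧ ainf T z = 0 ∧ asup T z = ⊤ := by
  intro x ⟨hinf, hsup⟩ ε hε
  obtain ⟨C, hC, hsub⟩ := hsub
  have hfreq : ∀ k : ℕ, ∃ n, k + 1 ≤ n ∧ avg T x n < 1 / ((k : ℝ) + 1) := by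
    intro k
    have h : Filter.liminf (fun n => (avg T x n : EReal)) atTop < ((1 / ((k : ℝ) + 1) : ℝ) : EReal) := by
      have : Filter.liminf (fun n => (avg T x n : EReal)) atTop = 0 := hinf
      rw [this]
      exact_mod_cast (by positivity : (0 : ℝ) < 1 / ((k : ℝ) + 1))
    have h2 := Filter.frequently_lt_of_liminf_lt (by isBoundedDefault) h
    obtain ⟨n, hn, hlt⟩ := (Filter.frequently_atTop.1 h2) (k + 1)
    exact ⟨n, hn, by exact_mod_cast hlt⟩
  choose n hn1 hn2 using hfreq
  have hn : Tendsto n atTop atTop :=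
    tendsto_atTop_mono (fun k => (Nat.le_succ k).trans (hn1 k)) tendsto_id
  have hxS : x ∈ nullSub T n := by
    change Tendsto (fun k => avg T x (n k)) atTop (𝓝 0)
    exact squeeze_zero (fun k => avg_nonneg' T _ _) (fun k => (hn2 k).le)
      tendsto_one_div_add_atTop_nhds_zero_nat
  have hxT : ∀ i, 1 ≤ i → T i x ∈ nullSub T n := mem_nullSub_T T hac n hn x hxS
  set S := nullSub T n with hS
  let E := S.topologicalClosure
  have hSE : S ≤ E := S.le_topologicalClosure
  haveI : CompleteSpace E := S.isClosed_topologicalClosure.completeSpace_coe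
  let U : ℕ → Set E := fun m => {y | ∃ n, m ≤ n ∧ (m : ℝ) < avg T (y : X) n}
  let V : ℕ → Set E := fun m => {y | ∃ n, m ≤ n ∧ avg T (y : X) n < 1 / ((m : ℝ) + 1)}
  have hcont : ∀ n, Continuous (fun y : E => avg T (y : X) n) := fun n =>
    (avg_continuous T n).comp continuous_subtype_val
  have hUo : ∀ m, IsOpen (U m) := by
    intro m
    have : U m = ⋃ n, ⋃ (_ : m ≤ n), {y : E | (m : ℝ) < avg T (y : X) n} := by
      ext y; simp [U]
    rw [this]
    exact isOpen_iUnion fun n => isOpen_iUnion fun _ => isOpen_lt continuous_const (hcont n)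
  have hVo : ∀ m, IsOpen (V m) := by
    intro m
    have : V m = ⋃ n, ⋃ (_ : m ≤ n), {y : E | avg T (y : X) n < 1 / ((m : ℝ) + 1)} := by
      ext y; simp [V]
    rw [this]
    exact isOpen_iUnion fun n => isOpen_iUnion fun _ => isOpen_lt (hcont n) continuous_const
  have hVd : ∀ m, Dense (V m) := by
    intro m y
    rw [Metric.mem_closure_iff]
    intro r hr
    have hy : (y : X) ∈ closure (S : Set X) := y.2
    obtain ⟨b, hb, hd⟩ := Metric.mem_closure_iff.1 hy r hr
    refine ⟨⟨b, hSE hb⟩, ?_, hd⟩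
    have hb' : Tendsto (fun k => avg T b (n k)) atTop (𝓝 0) := hb
    have hpos : (0 : ℝ) < 1 / ((m : ℝ) + 1) := by positivity
    obtain ⟨k, hk1, hk2⟩ :=
      ((hb'.eventually (gt_mem_nhds hpos)).and (hn.eventually_ge_atTop m)).exists
    exact ⟨n k, hk2, hk1⟩
  have hUd : ∀ m, Dense (U m) := by
    intro m
    by_contra hnd
    rw [Metric.dense_iff] at hnd
    push Not at hnd
    obtain ⟨y0, r, hr, hem⟩ := hnd
    have hball : ∀ y : X, y ∈ E → ‖y‖ < r → ∀ k, m ≤ k → avg T y k ≤ 2 * m := by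
      have hb : ∀ y : E, dist y y0 < r → ∀ k, m ≤ k → avg T (y : X) k ≤ m := by
        intro y hy k hk
        by_contra! hlt
        have : y ∈ Metric.ball y0 r ∩ U m := ⟨hy, k, hk, hlt⟩
        rw [hem] at this
        exact this
      intro y hy hyr k hk
      have h1 := hb (⟨y, hy⟩ + y0) (by simpa [dist_eq_norm] using hyr) k hk
      have h2 := hb y0 (by simpa using hr) k hk
      have h3 := avg_add_le T (y + y0) ((-1 : ℝ) • (y0 : X)) k
      rw [avg_smul'] at h3
      have h4 : y + y0 + (-1 : ℝ) • (y0 : X) = y := by simp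
      rw [h4] at h3
      simp only [Submodule.coe_add] at h1
      norm_num at h3
      linarith
    have hle : ∀ δ : ℝ, 0 < δ → ∀ᶠ k in atTop, avg T x k ≤ δ := by
      intro δ hδ
      obtain ⟨s, hs, hsδ⟩ : ∃ s : ℝ, 0 < s ∧ C * (2 * m / s) ≤ δ / 2 := by
        refine ⟨4 * C * (m + 1) / δ, by positivity, ?_⟩
        have : C * (2 * m / (4 * C * (m + 1) / δ)) = (δ / 2) * (m / (m + 1)) := by
          field_simp; ring
        rw [this]
        have : (m : ℝ) / (m + 1) ≤ 1 := by
          rw [div_le_one (by positivity)]; linarith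
        nlinarith
      obtain ⟨i, hi, his⟩ : ∃ i, 1 ≤ i ∧ ‖T i x‖ < r / s := by
        obtain ⟨k, hk⟩ := exists_nat_one_div_lt (show 0 < r / s by positivity)
        exact exists_small T x (n k) (le_trans (by omega) (hn1 k)) _ ((hn2 k).trans hk)
      have hlim : Tendsto (fun k : ℕ => (∑ j ∈ Finset.Icc 1 i, ‖T j x‖) / (k : ℝ)) atTop (𝓝 0) :=
        tendsto_const_div_atTop_nhds_zero_nat _
      filter_upwards [hlim.eventually (gt_mem_nhds (half_pos hδ)), eventually_ge_atTop m]
        with k hk1 hk2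
      have h1 := avg_split_le T C hC hsub x i hi k
      have h2 := hball (s • T i x) (E.smul_mem _ (hSE (hxT i hi))) (by
        rw [norm_smul, Real.norm_of_nonneg hs.le]
        rwa [lt_div_iff₀' hs] at his) k hk2
      rw [avg_smul', abs_of_pos hs] at h2
      have h3 : avg T (T i x) k ≤ 2 * m / s := by
        rwa [le_div_iff₀' hs]
      have h4 := mul_le_mul_of_nonneg_left h3 hC.le
      linarith
    obtain ⟨δ, hδ0, hδ⟩ := EReal.lt_iff_exists_real_btwn.1 hsup
    have hδ0' : 0 < δ := by exact_mod_cast hδ0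
    have : asup T x ≤ δ := by
      refine Filter.limsup_le_of_le (by isBoundedDefault) ?_
      filter_upwards [hle δ hδ0'] with k hk
      exact_mod_cast hk
    exact absurd hδ (not_lt.2 this)
  have hD : Dense (⋂ m, U m ∩ V m) :=
    dense_iInter_of_isOpen (fun m => (hUo m).inter (hVo m))
      (fun m => (hUd m).inter_of_isOpen_left (hVd m) (hUo m))
  obtain ⟨z, hz1, hz2⟩ := Metric.dense_iff.1 hD ⟨x, hSE hxS⟩ ε hε
  rw [Set.mem_iInter] at hz2
  refine ⟨z, ?_, ?_, ?_⟩
  · rw [Metric.mem_ball, dist_comm] at hz1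
    rw [← dist_eq_norm]
    exact hz1
  · apply le_antisymm
    · refine EReal.le_of_forall_lt_iff_le.1 ?_
      intro δ hδ
      have hδ' : 0 < δ := by exact_mod_cast hδ
      refine Filter.liminf_le_of_frequently_le ?_ (by isBoundedDefault)
      rw [Filter.frequently_atTop]
      intro a
      obtain ⟨k, hk⟩ := exists_nat_one_div_lt hδ'
      obtain ⟨j, hj, hlt⟩ := (hz2 (max a k)).2
      refine ⟨j, (le_max_left _ _).trans hj, ?_⟩
      have : 1 / (((max a k : ℕ) : ℝ) + 1) ≤ 1 / ((k : ℝ) + 1) := by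
        gcongr
        exact le_max_right _ _
      exact_mod_cast (hlt.le.trans (this.trans hk.le))
    · refine Filter.le_liminf_of_le (by isBoundedDefault) (Eventually.of_forall fun k => ?_)
      exact_mod_cast avg_nonneg' T _ k
  · rw [EReal.eq_top_iff_forall_lt]
    intro M
    refine lt_of_lt_of_le (b := ((M + 1 : ℝ) : EReal)) (by exact_mod_cast lt_add_one M) ?_
    refine Filter.le_limsup_of_frequently_le ?_ (by isBoundedDefault)
    rw [Filter.frequently_atTop]
    intro a
    obtain ⟨k, hk⟩ := exists_nat_ge (M + 1)
    obtain ⟨j, hj, hlt⟩ := (hz2 (max a k)).1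
    refine ⟨j, (le_max_left _ _).trans hj, ?_⟩
    have : (k : ℝ) ≤ ((max a k : ℕ) : ℝ) := by exact_mod_cast le_max_right _ _
    exact_mod_cast (hk.trans (this.trans hlt.le))
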